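/- Let n ∈ ℕ, let U, V ⊆ ℝⁿ be open subsets, let ν : U → V be any map, and let T : 𝒮(V) → 𝒮(U) be a linear map such that (T f)(x) = f(ν(x)) for every f ∈ 𝒮(V) and every x ∈ U. Then T is continuous with respect to the topologies induced from the Fréchet space of Schwartz functions on ℝⁿ. -/

import Mathlib

/-- The subspace `𝒮(U)` of the Schwartz space of `ℝⁿ`, consisting of those Schwartz
functions all of whose iterated derivatives vanish at every point of `ℝⁿ \ U`. -/
noncomputable def schwartzSubmodule {n : ℕ} (U : Set (EuclideanSpace ℝ (Fin n))) :
    Submodule ℝ (SchwartzMap (EuclideanSpace ℝ (Fin n)) ℝ) where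
  carrier := {f | ∀ z ∉ U, ∀ k : ℕ, iteratedFDeriv ℝ k (⇑f) z = 0}
  zero_mem' := by
    intro z _ k
    have : ⇑(0 : SchwartzMap (EuclideanSpace ℝ (Fin n)) ℝ) =
        (fun _ => (0 : ℝ)) := rfl
    rw [this, iteratedFDeriv_zero_fun]
    rfl
  add_mem' := by
    intro f g hf hg z hz k
    have hfg : ⇑(f + g) = ⇑f + ⇑g := rfl
    rw [hfg, iteratedFDeriv_add_apply (f.smooth k).contDiffAt (g.smooth k).contDiffAt, hf z hz k, hg z hz k,
      add_zero]
  smul_mem' := by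
    intro c f hf z hz k
    have hcf : ⇑(c • f) = c • ⇑f := rfl
    rw [hcf, iteratedFDeriv_const_smul_apply (f.smooth k).contDiffAt, hf z hz k, smul_zero]

/-!
Evaluation at a point is continuous on `𝓢(E, F)`, so `f ↦ (T f) x` is continuous for every `x`.
Its line derivatives in `x` are pointwise limits of difference quotients, hence continuous in `f`
by the Banach-Steinhaus theorem. Each Schwartz seminorm of `T f` is a weighted supremum of norms of
such derivatives, so it is a lower semicontinuous seminorm of `f`, and therefore continuous because
the closed subspace `𝒮(V)` of the Fréchet space `𝓢(E, F)` is barrelled. Completeness of `𝓢(E, F)`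
comes from termwise differentiation of series that converge absolutely in every Schwartz seminorm.
-/

open Filter Topology Uniformity
open scoped SchwartzMap LineDeriv

section Completeness

theorem completeSpace_of_summable_seminorm {𝕜 X κ : Type*} [NontriviallyNormedField 𝕜]
    [AddCommGroup X] [Module 𝕜 X] [UniformSpace X] [IsUniformAddGroup X] [Countable κ]
    {p : SeminormFamily 𝕜 X κ} (hp : WithSeminorms p)
    (hsum : ∀ u : ℕ → X, (∀ i, Summable fun j => p i (u j)) → Summable u) : CompleteSpace X := by
  have := hp.firstCountableTopology
  have : (𝓤 X).IsCountablyGenerated := IsUniformAddGroup.uniformity_countably_generated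
  obtain ⟨e, he⟩ := Countable.exists_injective_nat κ
  refine UniformSpace.complete_of_convergent_controlled_sequences
    (fun N => {fg | ∀ i ∈ e ⁻¹' Set.Iic N, p i (fg.2 - fg.1) < (1 / 2 : ℝ) ^ N})
    (fun N => ?_) fun u hu => ?_
  · refine ((Set.finite_Iic N).preimage he.injOn).eventually_all.2 fun i _ => ?_
    have hlim : Tendsto (fun fg : X × X => p i (fg.2 - fg.1)) (𝓤 X) (𝓝 0) := by
      rw [uniformity_eq_comap_nhds_zero, ← map_zero (p i)]
      exact ((hp.continuous_seminorm i).tendsto 0).comp tendsto_comap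
    exact hlim.eventually_lt_const (by positivity)
  · have hdiff : Summable fun j => u (j + 1) - u j := by
      refine hsum _ fun i => .of_norm_bounded_eventually_nat summable_geometric_two ?_
      filter_upwards [eventually_ge_atTop (e i)] with j hj
      rw [Real.norm_of_nonneg (apply_nonneg _ _)]
      exact (hu j j (j + 1) le_rfl j.le_succ i hj).le
    refine ⟨(∑' j, (u (j + 1) - u j)) + u 0, ?_⟩
    simpa only [Finset.sum_range_sub, sub_add_cancel] using
      hdiff.hasSum.tendsto_sum_nat.add_const (u 0)

instance instIsUniformAddGroupSubmodule {R X : Type*} [Ring R] [AddCommGroup X] [Module R X]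
    [UniformSpace X] [IsUniformAddGroup X] (M : Submodule R X) : IsUniformAddGroup M :=
  M.toAddSubgroup.isUniformAddGroup

theorem barrelledSpace_submodule_of_isClosed {𝕜 X : Type*} [NontriviallyNormedField 𝕜]
    [AddCommGroup X] [Module 𝕜 X] [UniformSpace X] [IsUniformAddGroup X] [ContinuousSMul 𝕜 X]
    [(𝓤 X).IsCountablyGenerated] [CompleteSpace X] {M : Submodule 𝕜 X}
    (hM : IsClosed (M : Set X)) : BarrelledSpace 𝕜 M := by
  have : CompleteSpace M := hM.completeSpace_coe
  have : (𝓤 M).IsCountablyGenerated := comap.isCountablyGenerated _ _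
  infer_instance

end Completeness

section SchwartzSpace

variable {ι E F : Type*} [NormedAddCommGroup E] [NormedSpace ℝ E]
  [NormedAddCommGroup F] [NormedSpace ℝ F]

theorem pow_mul_norm_iteratedFDeriv_tsum_le [CompleteSpace F] {f : ι → 𝓢(E, F)}
    (hf : ∀ k m, Summable fun i => SchwartzMap.seminorm ℝ k m (f i)) (k m : ℕ) (x : E) :
    ‖x‖ ^ k * ‖iteratedFDeriv ℝ m (fun y => ∑' i, f i y) x‖ ≤
      ∑' i, SchwartzMap.seminorm ℝ k m (f i) := by
  rw [iteratedFDeriv_tsum_apply (N := ⊤) (fun i => (f i).smooth ⊤) (fun m _ => hf 0 m)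
    (fun m i y _ => (f i).norm_iteratedFDeriv_le_seminorm ℝ m y) le_top]
  calc ‖x‖ ^ k * ‖∑' i, iteratedFDeriv ℝ m (f i) x‖
      = ‖∑' i, ‖x‖ ^ k • iteratedFDeriv ℝ m (f i) x‖ := by
        rw [tsum_const_smul'', norm_smul, norm_pow, norm_norm]
    _ ≤ ∑' i, SchwartzMap.seminorm ℝ k m (f i) :=
        tsum_of_norm_bounded (hf k m).hasSum fun i => by
          rw [norm_smul, norm_pow, norm_norm]
          exact (f i).le_seminorm ℝ k m x

theorem exists_schwartzMap_eq_tsum [CompleteSpace F] {f : ι → 𝓢(E, F)}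
    (hf : ∀ k m, Summable fun i => SchwartzMap.seminorm ℝ k m (f i)) :
    ∃ g : 𝓢(E, F), (∀ x, g x = ∑' i, f i x) ∧
      ∀ k m, SchwartzMap.seminorm ℝ k m g ≤ ∑' i, SchwartzMap.seminorm ℝ k m (f i) := by
  let g : 𝓢(E, F) :=
    { toFun := fun x => ∑' i, f i x
      smooth' := contDiff_tsum (N := ⊤) (fun i => (f i).smooth ⊤) (fun m _ => hf 0 m)
        fun m i x _ => (f i).norm_iteratedFDeriv_le_seminorm ℝ m x
      decay' := fun k m => ⟨_, pow_mul_norm_iteratedFDeriv_tsum_le hf k m⟩ }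
  exact ⟨g, fun _ => rfl, fun k m => g.seminorm_le_bound ℝ k m
    (tsum_nonneg fun i => apply_nonneg _ _) (pow_mul_norm_iteratedFDeriv_tsum_le hf k m)⟩

theorem summable_of_summable_schwartz_seminorm [CompleteSpace F] {f : ι → 𝓢(E, F)}
    (hf : ∀ k m, Summable fun i => SchwartzMap.seminorm ℝ k m (f i)) : Summable f := by
  obtain ⟨g, hg, -⟩ := exists_schwartzMap_eq_tsum hf
  refine ⟨g, ((schwartz_withSeminorms ℝ E F).tendsto_nhds _ g).2 ?_⟩
  rintro ⟨k, m⟩ ε hε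
  have htail := tendsto_tsum_compl_atTop_zero fun i => SchwartzMap.seminorm ℝ k m (f i)
  filter_upwards [htail.eventually_lt_const hε] with s hs
  obtain ⟨r, hr, hr_le⟩ := exists_schwartzMap_eq_tsum (f := fun i : {i // i ∉ s} => f i)
    fun k m => (hf k m).subtype _
  have hsplit : ∑ i ∈ s, f i - g = -r := by
    ext x
    have hx : Summable fun i => f i x :=
      .of_norm_bounded (hf 0 0) fun i => (f i).norm_le_seminorm ℝ x
    simp [hg, hr, ← hx.sum_add_tsum_subtype_compl s]
  rw [hsplit, map_neg_eq_map]
  exact (hr_le k m).trans_lt hs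

instance instIsCountablyGeneratedUniformitySchwartzMap : (𝓤 𝓢(E, F)).IsCountablyGenerated :=
  IsUniformAddGroup.uniformity_countably_generated

instance instCompleteSpaceSchwartzMap [CompleteSpace F] : CompleteSpace 𝓢(E, F) :=
  completeSpace_of_summable_seminorm (schwartz_withSeminorms ℝ E F) fun _ hu =>
    summable_of_summable_schwartz_seminorm fun k m => hu (k, m)

theorem continuous_schwartzMap_eval (x : E) : Continuous fun f : 𝓢(E, F) => f x :=
  (SchwartzMap.toBoundedContinuousFunctionCLM ℝ E F).continuous.eval_const x

theorem schwartz_seminorm_le_iff {f : 𝓢(E, F)} {k m : ℕ} {c : ℝ} (hc : 0 ≤ c) :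
    SchwartzMap.seminorm ℝ k m f ≤ c ↔
      ∀ (x : E) (v : Fin m → E), ‖x‖ ^ k * ‖∂^{v} f x‖ ≤ c * ∏ i, ‖v i‖ := by
  have hpoint (x : E) : ‖x‖ ^ k * ‖iteratedFDeriv ℝ m f x‖ ≤ c ↔
      ∀ v : Fin m → E, ‖x‖ ^ k * ‖∂^{v} f x‖ ≤ c * ∏ i, ‖v i‖ := by
    simpa only [norm_smul, norm_pow, norm_norm, smul_apply,
      SchwartzMap.iteratedLineDerivOp_eq_iteratedFDeriv] using
      ContinuousMultilinearMap.opNorm_le_iff (f := ‖x‖ ^ k • iteratedFDeriv ℝ m f x) hc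
  simp only [← hpoint]
  exact ⟨fun h x => (f.le_seminorm ℝ k m x).trans h, f.seminorm_le_bound ℝ k m hc⟩

end SchwartzSpace

section BarrelledDomain

variable {X E F : Type*} [AddCommGroup X] [Module ℝ X] [UniformSpace X] [IsUniformAddGroup X]
  [ContinuousSMul ℝ X] [BarrelledSpace ℝ X]
  [NormedAddCommGroup E] [NormedSpace ℝ E] [NormedAddCommGroup F] [NormedSpace ℝ F]

theorem continuous_lineDerivOp_eval {S : X →ₗ[ℝ] 𝓢(E, F)}
    (hS : ∀ x, Continuous fun a => S a x) (v x : E) : Continuous fun a => ∂_{v} (S a) x := by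
  let evalAt (y : E) : X →L[ℝ] F :=
    { toFun := fun a => S a y
      map_add' := by simp
      map_smul' := by simp
      cont := hS y }
  have hquotient : Tendsto (fun (t : ℝ) a => (t⁻¹ • (evalAt (x + t • v) - evalAt x)) a) (𝓝[≠] 0)
      (𝓝 fun a => ∂_{v} (S a) x) :=
    tendsto_pi_nhds.2 fun a => ((S a).hasFDerivAt x).hasLineDerivAt v |>.tendsto_slope_zero
  exact (continuousLinearMapOfTendsto _ hquotient).continuous

theorem continuous_iteratedLineDerivOp_eval {S : X →ₗ[ℝ] 𝓢(E, F)}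
    (hS : ∀ x, Continuous fun a => S a x) {m : ℕ} (v : Fin m → E) (x : E) :
    Continuous fun a => ∂^{v} (S a) x := by
  induction m generalizing S with
  | zero => exact hS x
  | succ m ih =>
    simp only [LineDeriv.iteratedLineDerivOp_succ_right]
    exact ih (S := (LineDeriv.lineDerivOpCLM ℝ 𝓢(E, F) (v (Fin.last m))).toLinearMap ∘ₗ S)
      (continuous_lineDerivOp_eval hS _) (Fin.init v)

theorem lowerSemicontinuous_schwartz_seminorm_comp {S : X →ₗ[ℝ] 𝓢(E, F)}
    (hS : ∀ x, Continuous fun a => S a x) (k m : ℕ) :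
    LowerSemicontinuous ((SchwartzMap.seminorm ℝ k m).comp S) := by
  refine lowerSemicontinuous_iff_isClosed_preimage.2 fun c => ?_
  rcases lt_or_ge c 0 with hc | hc
  · convert! isClosed_empty
    ext a
    simpa using hc.trans_le (apply_nonneg (SchwartzMap.seminorm ℝ k m) (S a))
  · simp only [Set.preimage, Set.mem_Iic, Seminorm.comp_apply, schwartz_seminorm_le_iff hc,
      Set.ofPred_forall]
    exact isClosed_iInter fun x => isClosed_iInter fun v => isClosed_le
      (continuous_const.mul (continuous_iteratedLineDerivOp_eval hS v x).norm) continuous_const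

theorem continuous_schwartzMap_of_continuous_eval {S : X →ₗ[ℝ] 𝓢(E, F)}
    (hS : ∀ x, Continuous fun a => S a x) : Continuous S :=
  (schwartz_withSeminorms ℝ E F).continuous_of_continuous_comp S fun ⟨k, m⟩ =>
    Seminorm.continuous_of_lowerSemicontinuous _ (lowerSemicontinuous_schwartz_seminorm_comp hS k m)

end BarrelledDomain

section FlatSchwartz

variable {E E' F : Type*} [NormedAddCommGroup E] [NormedSpace ℝ E]
  [NormedAddCommGroup E'] [NormedSpace ℝ E'] [NormedAddCommGroup F] [NormedSpace ℝ F]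

variable (F) in
/-- The space `𝒮(U)` of `F`-valued Schwartz functions that are flat off `U`, on an arbitrary
normed space. For real-valued functions on `ℝⁿ` it unfolds to `schwartzSubmodule U`. -/
def flatSchwartz (U : Set E) : Submodule ℝ 𝓢(E, F) where
  carrier := {f | ∀ z ∉ U, ∀ k : ℕ, iteratedFDeriv ℝ k f z = 0}
  zero_mem' z _ k := congrFun iteratedFDeriv_fun_zero z
  add_mem' {f g} hf hg z hz k :=
    (iteratedFDeriv_add_apply (f.smooth k).contDiffAt (g.smooth k).contDiffAt).trans <| by
      rw [hf z hz k, hg z hz k, add_zero]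
  smul_mem' c f hf z hz k :=
    (iteratedFDeriv_const_smul_apply (f.smooth k).contDiffAt).trans <| by
      rw [hf z hz k, smul_zero]

theorem mem_flatSchwartz_iff {U : Set E} {f : 𝓢(E, F)} :
    f ∈ flatSchwartz F U ↔ ∀ z ∉ U, ∀ (k : ℕ) (v : Fin k → E), ∂^{v} f z = 0 := by
  simp only [SchwartzMap.iteratedLineDerivOp_eq_iteratedFDeriv]
  exact forall₃_congr fun z _ k => ContinuousMultilinearMap.ext_iff

theorem apply_eq_zero_of_mem_flatSchwartz {U : Set E} {f : 𝓢(E, F)} (hf : f ∈ flatSchwartz F U)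
    {x : E} (hx : x ∉ U) : f x = 0 :=
  mem_flatSchwartz_iff.1 hf x hx 0 Fin.elim0

theorem isClosed_flatSchwartz (U : Set E) : IsClosed (flatSchwartz F U : Set 𝓢(E, F)) := by
  simp only [← SetLike.setOfPred_mem_eq, mem_flatSchwartz_iff, Set.ofPred_forall]
  exact isClosed_iInter fun z => isClosed_iInter fun _ => isClosed_iInter fun k =>
    isClosed_iInter fun v => isClosed_eq
      ((continuous_schwartzMap_eval z).comp (LineDeriv.continuous_iteratedLineDerivOp v))
      continuous_const

theorem stmt_7_general [CompleteSpace F] {U : Set E} {V : Set E'} (ν : E → E')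
    (T : flatSchwartz F V →ₗ[ℝ] flatSchwartz F U)
    (hT : ∀ f, ∀ x ∈ U, (T f : 𝓢(E, F)) x = (f : 𝓢(E', F)) (ν x)) :
    Continuous T := by
  have : BarrelledSpace ℝ (flatSchwartz F V) :=
    barrelledSpace_submodule_of_isClosed (isClosed_flatSchwartz V)
  suffices heval : ∀ x, Continuous fun f => (T f : 𝓢(E, F)) x from
    continuous_induced_rng.2 <|
      continuous_schwartzMap_of_continuous_eval (S := (flatSchwartz F U).subtype ∘ₗ T) heval
  intro x
  by_cases hx : x ∈ U
  · simp only [hT _ x hx]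
    exact (continuous_schwartzMap_eval (ν x)).comp continuous_subtype_val
  · simp only [apply_eq_zero_of_mem_flatSchwartz (T _).2 hx]
    exact continuous_const

end FlatSchwartz

/-- Let `U, V ⊆ ℝⁿ` be open, `ν : U → V` any map, and
`T : 𝒮(V) → 𝒮(U)` a linear map acting by `(T f)(x) = f(ν x)` for `x ∈ U`.
Then `T` is continuous for the topologies induced from the Schwartz space of `ℝⁿ`. -/
theorem stmt_7 (n : ℕ) (U V : Set (EuclideanSpace ℝ (Fin n))) (hU : IsOpen U)
    (hV : IsOpen V) (ν : EuclideanSpace ℝ (Fin n) → EuclideanSpace ℝ (Fin n))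
    (hν : Set.MapsTo ν U V)
    (T : schwartzSubmodule V →ₗ[ℝ] schwartzSubmodule U)
    (hT : ∀ (f : schwartzSubmodule V) (x : EuclideanSpace ℝ (Fin n)), x ∈ U →
      ((T f : SchwartzMap (EuclideanSpace ℝ (Fin n)) ℝ)) x
        = (f : SchwartzMap (EuclideanSpace ℝ (Fin n)) ℝ) (ν x)) :
    Continuous T :=
  stmt_7_general ν T hT
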